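/- arXiv:1503.02148 — 5 statements merged into one kernel-verified Lean document; each statement's English description precedes it below -/
import Mathlib

section
/- Let x ∈ ℝ, δ > 0 and β ∈ (0,1]. Suppose f : ℝ → ℝ is continuous on [x, x+δ], differentiable on the open interval (x, x+δ), and that the limit lim_{ε→0⁺} (1/β)·ε^{1−β}·f′(x+ε) = L exists. Then the forward fractional velocity of f at x of order β exists and equals L, i.e. lim_{ε→0⁺} (f(x+ε) − f(x))/ε^β = L. -/
open Filter Topology Set

/-- Forward fractional velocity via limiting ordinary derivative:
if `f` is continuous on `[x, x+δ]`, differentiable on `(x, x+δ)` and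
`(1/β)·ε^(1-β)·f'(x+ε) → L` as `ε → 0⁺`, then
`(f(x+ε) - f(x))/ε^β → L` as `ε → 0⁺`. -/
theorem fractional_velocity_of_deriv_limit
    (f : ℝ → ℝ) (x δ β L : ℝ) (hδ : 0 < δ) (hβ0 : 0 < β) (hβ1 : β ≤ 1)
    (hcont : ContinuousOn f (Set.Icc x (x + δ)))
    (hdiff : ∀ t ∈ Set.Ioo x (x + δ), DifferentiableAt ℝ f t)
    (hlim : Tendsto (fun ε : ℝ => (1 / β) * ε ^ (1 - β) * deriv f (x + ε))
      (𝓝[>] (0 : ℝ)) (𝓝 L)) :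
    Tendsto (fun ε : ℝ => (f (x + ε) - f x) / ε ^ β) (𝓝[>] (0 : ℝ)) (𝓝 L) := by
  refine HasDerivAt.lhopital_zero_right_on_Ioo (a := 0) (b := δ)
    (f' := fun ε => deriv f (x + ε)) (g' := fun ε => β * ε ^ (β - 1)) hδ ?_ ?_ ?_ ?_ ?_ ?_
  · intro t ht
    have h := (hdiff (x + t) ⟨by linarith [ht.1], by linarith [ht.2]⟩).hasDerivAt
    exact (HasDerivAt.comp_const_add x t h).sub_const (f x)
  · intro t ht
    exact Real.hasDerivAt_rpow_const (Or.inl ht.1.ne')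
  · intro t ht
    exact (mul_pos hβ0 (Real.rpow_pos_of_pos ht.1 _)).ne'
  · have h1 : Tendsto f (𝓝[Set.Icc x (x + δ)] x) (𝓝 (f x)) :=
      hcont x ⟨le_refl x, by linarith⟩
    have h2 : Tendsto (fun ε : ℝ => x + ε) (𝓝[>] (0 : ℝ)) (𝓝[Set.Icc x (x + δ)] x) := by
      refine tendsto_nhdsWithin_iff.2 ⟨?_, ?_⟩
      · have h3 : Tendsto (fun ε : ℝ => x + ε) (𝓝 (0 : ℝ)) (𝓝 (x + 0)) :=
          (continuous_const.add continuous_id).tendsto 0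
        rw [add_zero] at h3
        exact h3.mono_left nhdsWithin_le_nhds
      · filter_upwards [Ioo_mem_nhdsGT hδ] with t ht
        exact ⟨by linarith [ht.1], by linarith [ht.2]⟩
    simpa using (h1.comp h2).sub_const (f x)
  · have h := (Real.continuousAt_rpow_const 0 β (Or.inr hβ0.le)).tendsto
    rw [Real.zero_rpow hβ0.ne'] at h
    exact h.mono_left nhdsWithin_le_nhds
  · refine hlim.congr' ?_
    filter_upwards [self_mem_nhdsWithin] with t ht
    have ht : 0 < t := ht
    have h : t ^ (1 - β) = (t ^ (β - 1))⁻¹ := by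
      rw [← Real.rpow_neg ht.le, neg_sub]
    have h' := (Real.rpow_pos_of_pos ht (β - 1)).ne'
    rw [h]
    field_simp
end

section
/- Let f : ℝ → ℝ, x ∈ ℝ, β > 0 and δ > 0. Suppose f is monotone on [x, x+δ] (either monotone nondecreasing on [x,x+δ] or monotone nonincreasing on [x,x+δ]) and that the forward fractional velocity of f at x of order β exists and equals L, i.e. lim_{ε→0⁺} (f(x+ε) − f(x))/ε^β = L. Then lim_{ε→0⁺} (sup_{[x,x+ε]} f − inf_{[x,x+ε]} f)/ε^β = |L|. -/
open Filter Topology Set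

/-- Limit of the oscillatory quotient: if `f` is monotone on `[x, x+δ]` and the
forward fractional velocity of order `β` at `x` equals `L`, then
`(sup_{[x,x+ε]} f - inf_{[x,x+ε]} f)/ε^β → |L|` as `ε → 0⁺`. -/
theorem oscillation_quotient_tendsto_abs
    (f : ℝ → ℝ) (x β δ L : ℝ) (hβ : 0 < β) (hδ : 0 < δ)
    (hmono : MonotoneOn f (Set.Icc x (x + δ)) ∨ AntitoneOn f (Set.Icc x (x + δ)))
    (hvel : Tendsto (fun ε : ℝ => (f (x + ε) - f x) / ε ^ β) (𝓝[>] (0 : ℝ)) (𝓝 L)) :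
    Tendsto (fun ε : ℝ =>
        (sSup (f '' Set.Icc x (x + ε)) - sInf (f '' Set.Icc x (x + ε))) / ε ^ β)
      (𝓝[>] (0 : ℝ)) (𝓝 |L|) := by
  refine hvel.abs.congr' ?_
  filter_upwards [Ioo_mem_nhdsGT hδ] with ε hε
  obtain ⟨h0, h1⟩ := hε
  have hpos : 0 < ε ^ β := Real.rpow_pos_of_pos h0 β
  have hsub : ∀ y ∈ Set.Icc x (x + ε), y ∈ Set.Icc x (x + δ) :=
    fun y hy => ⟨hy.1, by linarith [hy.2]⟩
  have hl : x ∈ Set.Icc x (x + ε) := ⟨le_refl _, by linarith⟩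
  have hr : x + ε ∈ Set.Icc x (x + ε) := ⟨by linarith, le_refl _⟩
  rw [abs_div, abs_of_pos hpos]
  congr 1
  rcases hmono with hm | hm
  · have hG : IsGreatest (f '' Set.Icc x (x + ε)) (f (x + ε)) := by
      refine ⟨⟨_, hr, rfl⟩, ?_⟩
      rintro _ ⟨y, hy, rfl⟩
      exact hm (hsub y hy) (hsub _ hr) hy.2
    have hL : IsLeast (f '' Set.Icc x (x + ε)) (f x) := by
      refine ⟨⟨_, hl, rfl⟩, ?_⟩
      rintro _ ⟨y, hy, rfl⟩
      exact hm (hsub _ hl) (hsub y hy) hy.1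
    rw [hG.csSup_eq, hL.csInf_eq, abs_of_nonneg]
    linarith [hL.2 hG.1]
  · have hG : IsGreatest (f '' Set.Icc x (x + ε)) (f x) := by
      refine ⟨⟨_, hl, rfl⟩, ?_⟩
      rintro _ ⟨y, hy, rfl⟩
      exact hm (hsub _ hl) (hsub y hy) hy.1
    have hL : IsLeast (f '' Set.Icc x (x + ε)) (f (x + ε)) := by
      refine ⟨⟨_, hr, rfl⟩, ?_⟩
      rintro _ ⟨y, hy, rfl⟩
      exact hm (hsub y hy) (hsub _ hr) hy.2
    rw [hG.csSup_eq, hL.csInf_eq, abs_of_nonpos]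
    · ring
    · linarith [hL.2 hG.1]
end

section
/- Let f, g : ℝ → ℝ, x ∈ ℝ, δ > 0 and β ∈ (0,1]. Suppose f and g are continuous on [x, x+δ], differentiable on the open interval (x, x+δ), and that the limit lim_{ε→0⁺} (1/β)·ε^{1−β}·( f′(x+ε)·(g(x+ε) − g(x)) + g′(x+ε)·(f(x+ε) − f(x)) ) = L exists. Then the forward fractional co-variation of f and g at x of order β exists and equals L, i.e. lim_{ε→0⁺} (f(x+ε) − f(x))·(g(x+ε) − g(x))/ε^β = L. -/
open Filter Topology Set

/-- Limiting case of the fractional co-variation: if `f, g` are continuous on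
`[x, x+δ]`, differentiable on `(x, x+δ)`, and
`(1/β)·ε^(1-β)·(f'(x+ε)·(g(x+ε)-g(x)) + g'(x+ε)·(f(x+ε)-f(x))) → L` as `ε → 0⁺`,
then the forward fractional co-variation of `f` and `g` at `x` of order `β`
exists and equals `L`. -/
theorem covariation_of_deriv_limit
    (f g : ℝ → ℝ) (x δ β L : ℝ) (hδ : 0 < δ) (hβ0 : 0 < β) (hβ1 : β ≤ 1)
    (hfc : ContinuousOn f (Set.Icc x (x + δ)))
    (hgc : ContinuousOn g (Set.Icc x (x + δ)))
    (hfd : ∀ t ∈ Set.Ioo x (x + δ), DifferentiableAt ℝ f t)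
    (hgd : ∀ t ∈ Set.Ioo x (x + δ), DifferentiableAt ℝ g t)
    (hlim : Tendsto (fun ε : ℝ => (1 / β) * ε ^ (1 - β) *
        (deriv f (x + ε) * (g (x + ε) - g x) + deriv g (x + ε) * (f (x + ε) - f x)))
      (𝓝[>] (0 : ℝ)) (𝓝 L)) :
    Tendsto (fun ε : ℝ => (f (x + ε) - f x) * (g (x + ε) - g x) / ε ^ β)
      (𝓝[>] (0 : ℝ)) (𝓝 L) := by
  have key : ∀ h : ℝ → ℝ, ContinuousOn h (Set.Icc x (x + δ)) →
      Tendsto (fun ε : ℝ => h (x + ε) - h x) (𝓝[>] (0 : ℝ)) (𝓝 0) := by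
    intro h hc
    have h1 : Tendsto h (𝓝[Set.Icc x (x + δ)] x) (𝓝 (h x)) :=
      hc x ⟨le_refl _, by linarith⟩
    have h2 : Tendsto (fun ε : ℝ => x + ε) (𝓝[>] (0 : ℝ)) (𝓝[Set.Icc x (x + δ)] x) := by
      apply tendsto_nhdsWithin_of_tendsto_nhds_of_eventually_within
      · have : Tendsto (fun ε : ℝ => x + ε) (𝓝 0) (𝓝 (x + 0)) :=
          (continuous_const.add continuous_id).tendsto 0
        rw [add_zero] at this
        exact this.mono_left nhdsWithin_le_nhds
      · filter_upwards [Ioo_mem_nhdsGT hδ] with ε hε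
        exact ⟨by linarith [hε.1], by linarith [hε.2]⟩
    have h3 := (h1.comp h2).sub_const (h x)
    simpa [Function.comp_def] using h3
  have hd : ∀ h : ℝ → ℝ, (∀ t ∈ Set.Ioo x (x + δ), DifferentiableAt ℝ h t) →
      ∀ ε ∈ Set.Ioo (0 : ℝ) δ,
        HasDerivAt (fun ε : ℝ => h (x + ε) - h x) (deriv h (x + ε)) ε := by
    intro h hh ε hε
    have := (hh (x + ε) ⟨by linarith [hε.1], by linarith [hε.2]⟩).hasDerivAt
    exact (this.comp_const_add x ε).sub_const _
  refine HasDerivAt.lhopital_zero_right_on_Ioo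
    (f' := fun ε => deriv f (x + ε) * (g (x + ε) - g x) + (f (x + ε) - f x) * deriv g (x + ε))
    (g' := fun ε => β * ε ^ (β - 1)) hδ
    (fun ε hε => (hd f hfd ε hε).mul (hd g hgd ε hε))
    (fun ε hε => Real.hasDerivAt_rpow_const (Or.inl hε.1.ne'))
    (fun ε hε => (mul_pos hβ0 (Real.rpow_pos_of_pos hε.1 _)).ne') ?_ ?_ ?_
  · simpa using (key f hfc).mul (key g hgc)
  · have := (Real.continuous_rpow_const hβ0.le).tendsto (0 : ℝ)
    rw [Real.zero_rpow hβ0.ne'] at this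
    exact this.mono_left nhdsWithin_le_nhds
  · refine hlim.congr' ?_
    filter_upwards [self_mem_nhdsWithin] with ε hε
    have hε : 0 < ε := hε
    have e : ε ^ (1 - β) = (ε ^ (β - 1))⁻¹ := by
      rw [← Real.rpow_neg hε.le, neg_sub]
    have := (Real.rpow_pos_of_pos hε (β - 1)).ne'
    rw [e]
    field_simp
    try ring
end

section
/- Let f, g : ℝ → ℝ, x ∈ ℝ and β > 0. Suppose the forward fractional velocity of f at x of order β exists and equals L_f, the forward fractional velocity of g at x of order β exists and equals L_g, and the forward fractional co-variation of f and g at x of order β exists and equals L. Then the forward fractional velocity of the product f·g at x of order β exists and equals L_f·g(x) + L_g·f(x) + L. -/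
open Filter Topology

/-- Product rule for the forward fractional velocity:
`D⁺_β[f g](x) = D⁺_β[f](x)·g(x) + D⁺_β[g](x)·f(x) + [f,g]⁺_β(x)`. -/
theorem forward_fractional_velocity_product_rule
    (f g : ℝ → ℝ) (x β Lf Lg L : ℝ) (hβ : 0 < β)
    (hf : Tendsto (fun ε : ℝ => (f (x + ε) - f x) / ε ^ β) (𝓝[>] (0 : ℝ)) (𝓝 Lf))
    (hg : Tendsto (fun ε : ℝ => (g (x + ε) - g x) / ε ^ β) (𝓝[>] (0 : ℝ)) (𝓝 Lg))
    (hfg : Tendsto (fun ε : ℝ => (f (x + ε) - f x) * (g (x + ε) - g x) / ε ^ β)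
      (𝓝[>] (0 : ℝ)) (𝓝 L)) :
    Tendsto (fun ε : ℝ => (f (x + ε) * g (x + ε) - f x * g x) / ε ^ β)
      (𝓝[>] (0 : ℝ)) (𝓝 (Lf * g x + Lg * f x + L)) := by
  refine (((hf.mul_const (g x)).add (hg.mul_const (f x))).add hfg).congr fun ε => ?_
  simp only [div_eq_mul_inv]
  ring
end

section
/- Let g : ℝ → ℝ, x ∈ ℝ and β > 0. Suppose g is continuous at x, g(x) ≠ 0, and the forward fractional velocity of g at x of order β exists and equals L. Then the forward fractional velocity of the reciprocal function 1/g (the function t ↦ 1/g(t)) at x of order β exists and equals −L/g(x)². -/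
open Filter Topology

/-- Forward fractional velocity of a reciprocal:
if `g` is continuous at `x`, `g(x) ≠ 0` and `D⁺_β[g](x) = L`, then
`D⁺_β[1/g](x) = -L/g(x)²`. -/
theorem forward_fractional_velocity_inv
    (g : ℝ → ℝ) (x β L : ℝ) (hβ : 0 < β)
    (hgc : ContinuousAt g x) (hgx : g x ≠ 0)
    (hg : Tendsto (fun ε : ℝ => (g (x + ε) - g x) / ε ^ β) (𝓝[>] (0 : ℝ)) (𝓝 L)) :
    Tendsto (fun ε : ℝ => (1 / g (x + ε) - 1 / g x) / ε ^ β)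
      (𝓝[>] (0 : ℝ)) (𝓝 (-L / g x ^ 2)) := by
  have h0 : Tendsto (fun ε : ℝ => x + ε) (𝓝[>] (0 : ℝ)) (𝓝 x) := by
    have h : Tendsto (fun ε : ℝ => x + ε) (𝓝 (0 : ℝ)) (𝓝 (x + 0)) :=
      (continuous_const.add continuous_id).tendsto 0
    rw [add_zero] at h
    exact h.mono_left nhdsWithin_le_nhds
  have h1 : Tendsto (fun ε : ℝ => g (x + ε)) (𝓝[>] (0 : ℝ)) (𝓝 (g x)) :=
    Tendsto.comp hgc h0
  have h2 := hg.neg.div (h1.mul_const (g x)) (mul_ne_zero hgx hgx)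
  rw [pow_two]
  refine h2.congr' ?_
  filter_upwards [h1.eventually_ne hgx, self_mem_nhdsWithin] with ε hε hpos
  have hp : ε ^ β ≠ 0 := (Real.rpow_pos_of_pos hpos β).ne'
  simp only [Pi.div_apply]
  field_simp
  ring
end
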